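/- (Orders of the striction curve of a developable surface; core of the topological classification.) Assume in addition that κ₁(s) = 0 for all s ∈ I (developable case). Let s₀ ∈ I, let m ≥ 1 and r ≥ 1 be integers, and suppose τ₁ vanishes to order exactly m−1 at s₀ (τ₁^{(k)}(s₀) = 0 for 0 ≤ k ≤ m−2, and τ₁^{(m−1)}(s₀) ≠ 0) and τ₀ vanishes to order exactly r−1 at s₀ (τ₀^{(k)}(s₀) = 0 for 0 ≤ k ≤ r−2, and τ₀^{(r−1)}(s₀) ≠ 0). Then the numbers A_k = ⟪σ^{(k)}(s₀), v₀(s₀)⟫, B_k = ⟪σ^{(k)}(s₀), n₀(s₀)⟫, C_k = ⟪σ^{(k)}(s₀), t₀(s₀)⟫ satisfy: A_k = 0 for 1 ≤ k ≤ m−1 and A_m ≠ 0; B_k = 0 for 1 ≤ k ≤ m and B_{m+1} ≠ 0; and C_k = 0 for 1 ≤ k ≤ m+r and C_{m+1+r} ≠ 0. (Hence the germ of the striction curve σ at s₀ is a space curve of type (m, m+1, m+1+r).) -/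

import Mathlib

noncomputable section
open scoped RealInnerProductSpace

/-- Euclidean 3-space `ℝ³`. -/
abbrev E3 : Type := EuclideanSpace ℝ (Fin 3)

/-- The cross product on `E3`. -/
def cross (u v : E3) : E3 :=
  (WithLp.equiv 2 (Fin 3 → ℝ)).symm
    ![u 1 * v 2 - u 2 * v 1, u 2 * v 0 - u 0 * v 2, u 0 * v 1 - u 1 * v 0]

/-- Determinant of the 3×3 matrix with columns `u`, `v`, `w`. -/
def det3 (u v w : E3) : ℝ :=
  Matrix.det !![u 0, v 0, w 0; u 1, v 1, w 1; u 2, v 2, w 2]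

namespace Ruled

/-- The director curve `e = v₀`. -/
def e (v₀ : ℝ → E3) : ℝ → E3 := v₀

/-- The base curve `r = v₀ × v₁`. -/
def r (v₀ v₁ : ℝ → E3) : ℝ → E3 := fun s => cross (v₀ s) (v₁ s)

/-- The parametrization `F(s,t) = r(s) + t • e(s)` of the ruled surface. -/
def F (v₀ v₁ : ℝ → E3) (s t : ℝ) : E3 := r v₀ v₁ s + t • v₀ s

/-- `n₀ = v₀'`. -/
def n₀ (v₀ : ℝ → E3) : ℝ → E3 := fun s => deriv v₀ s

/-- `κ₁ = ⟪v₀', v₁'⟫`, the ε-part of the dual curvature. -/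
def κ₁ (v₀ v₁ : ℝ → E3) : ℝ → ℝ := fun s => ⟪deriv v₀ s, deriv v₁ s⟫

/-- `n₁ = v₁' - κ₁ • v₀'`. -/
def n₁ (v₀ v₁ : ℝ → E3) : ℝ → E3 := fun s => deriv v₁ s - κ₁ v₀ v₁ s • deriv v₀ s

/-- `t₀ = v₀ × n₀`. -/
def t₀ (v₀ : ℝ → E3) : ℝ → E3 := fun s => cross (v₀ s) (n₀ v₀ s)

/-- `t₁ = v₀ × n₁ + v₁ × n₀`. -/
def t₁ (v₀ v₁ : ℝ → E3) : ℝ → E3 :=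
  fun s => cross (v₀ s) (n₁ v₀ v₁ s) + cross (v₁ s) (n₀ v₀ s)

/-- `τ₀ = ⟪n₀', t₀⟫`, the real part of the dual torsion. -/
def τ₀ (v₀ : ℝ → E3) : ℝ → ℝ := fun s => ⟪deriv (n₀ v₀) s, t₀ v₀ s⟫

/-- `τ₁ = ⟪n₀', t₁⟫ + ⟪n₁', t₀⟫`, the ε-part of the dual torsion. -/
def τ₁ (v₀ v₁ : ℝ → E3) : ℝ → ℝ :=
  fun s => ⟪deriv (n₀ v₀) s, t₁ v₀ v₁ s⟫ + ⟪deriv (n₁ v₀ v₁) s, t₀ v₀ s⟫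

/-- The striction curve `σ(s) = r(s) - ⟪r'(s), e'(s)⟫ • e(s)`. -/
def strict (v₀ v₁ : ℝ → E3) : ℝ → E3 :=
  fun s => r v₀ v₁ s - ⟪deriv (r v₀ v₁) s, deriv (e v₀) s⟫ • e v₀ s

end Ruled

open Ruled

/-!
In the moving frame `v₀, n₀, t₀` along the spherical curve `v₀` one has
`v₀' = n₀`, `n₀' = -v₀ + τ₀ t₀`, `t₀' = -τ₀ n₀`, and the striction curve satisfies
`σ' = τ₁ v₀ + κ₁ t₀`. In the developable case `⟪σ', w⟫ = τ₁ ⟪v₀, w⟫` for every fixed vector `w`,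
and orders of vanishing add under multiplication, so it remains to find the order of `⟪v₀, w⟫` at
`s₀` for `w = v₀ s₀, n₀ s₀, t₀ s₀`. The first two are `0` and `1`; for the third,
`g = ⟪v₀, t₀ s₀⟫` has `g s₀ = g' s₀ = 0` and solves `g'' = -g + τ₀ ⟪t₀, t₀ s₀⟫`, so its order is
that of `τ₀` plus two.
-/

open Filter Topology ContDiff

section VanishingOrder

variable {𝕜 F 𝔸 : Type*} [NontriviallyNormedField 𝕜] [NormedAddCommGroup F] [NormedSpace 𝕜 F]
  [NormedRing 𝔸] [NormedAlgebra 𝕜 𝔸] {n : ℕ} {x : 𝕜}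

/-- `f` vanishes to order exactly `n` at `x`, expressed through iterated derivatives so that it
makes sense for functions that are not analytic. -/
structure HasVanishingOrderAt (f : 𝕜 → F) (n : ℕ) (x : 𝕜) : Prop where
  iteratedDeriv_eq_zero : ∀ k < n, iteratedDeriv k f x = 0
  iteratedDeriv_ne_zero : iteratedDeriv n f x ≠ 0

namespace HasVanishingOrderAt

theorem zero_iff {f : 𝕜 → F} : HasVanishingOrderAt f 0 x ↔ f x ≠ 0 :=
  ⟨fun h => by simpa using h.iteratedDeriv_ne_zero, fun h => ⟨by simp, by simpa using h⟩⟩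

theorem succ {f : 𝕜 → F} (hfx : f x = 0) (hf : HasVanishingOrderAt (deriv f) n x) :
    HasVanishingOrderAt f (n + 1) x where
  iteratedDeriv_eq_zero
    | 0, _ => by simpa using hfx
    | k + 1, hk => by
      rw [iteratedDeriv_succ']
      exact hf.iteratedDeriv_eq_zero k (by lia)
  iteratedDeriv_ne_zero := by
    rw [iteratedDeriv_succ']
    exact hf.iteratedDeriv_ne_zero

theorem congr {f g : 𝕜 → F} (hf : HasVanishingOrderAt f n x) (hfg : g =ᶠ[𝓝 x] f) :
    HasVanishingOrderAt g n x where
  iteratedDeriv_eq_zero k hk := by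
    rw [hfg.iteratedDeriv_eq k]
    exact hf.iteratedDeriv_eq_zero k hk
  iteratedDeriv_ne_zero := by
    rw [hfg.iteratedDeriv_eq n]
    exact hf.iteratedDeriv_ne_zero

theorem mul [NoZeroDivisors 𝔸] [CharZero 𝔸] {f g : 𝕜 → 𝔸} {a b : ℕ}
    (hf : HasVanishingOrderAt f a x) (hg : HasVanishingOrderAt g b x)
    (hf' : ContDiffAt 𝕜 (a + b : ℕ) f x) (hg' : ContDiffAt 𝕜 (a + b : ℕ) g x) :
    HasVanishingOrderAt (f * g) (a + b) x := by
  have leibniz (k : ℕ) (hk : k ≤ a + b) := iteratedDeriv_mul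
    (hf'.of_le (Nat.cast_le.2 hk)) (hg'.of_le (Nat.cast_le.2 hk))
  have leibniz_term_eq_zero (k i : ℕ) (h : i < a ∨ k - i < b) :
      k.choose i * iteratedDeriv i f x * iteratedDeriv (k - i) g x = 0 := by
    rcases h with h | h
    · rw [hf.iteratedDeriv_eq_zero i h, mul_zero, zero_mul]
    · rw [hg.iteratedDeriv_eq_zero _ h, mul_zero]
  constructor
  · intro k hk
    rw [leibniz k hk.le]
    exact Finset.sum_eq_zero fun i hi =>
      leibniz_term_eq_zero k i (by rw [Finset.mem_range] at hi; lia)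
  · rw [leibniz _ le_rfl, Finset.sum_eq_single_of_mem a (Finset.mem_range.2 (by lia))
      fun i hi hia => leibniz_term_eq_zero _ i (by rw [Finset.mem_range] at hi; lia),
      Nat.add_sub_cancel_left]
    have choose_ne_zero : ((a + b).choose a : 𝔸) ≠ 0 :=
      Nat.cast_ne_zero.2 (Nat.choose_pos (Nat.le_add_right a b)).ne'
    exact mul_ne_zero (mul_ne_zero choose_ne_zero hf.iteratedDeriv_ne_zero)
      hg.iteratedDeriv_ne_zero

theorem of_deriv_deriv_eq {g h : 𝕜 → F} {c : 𝕜} (hh : HasVanishingOrderAt h n x)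
    (hode : deriv (deriv g) =ᶠ[𝓝 x] c • g + h) (hgx : g x = 0) (h_deriv : deriv g x = 0)
    (hg' : ContDiffAt 𝕜 n g x) (hh' : ContDiffAt 𝕜 n h x) :
    HasVanishingOrderAt g (n + 2) x := by
  have recurrence (k : ℕ) (hk : k ≤ n) :
      iteratedDeriv (k + 2) g x = c • iteratedDeriv k g x + iteratedDeriv k h x := by
    have hgk : ContDiffAt 𝕜 k g x := hg'.of_le (Nat.cast_le.2 hk)
    rw [iteratedDeriv_succ', iteratedDeriv_succ', hode.iteratedDeriv_eq k,
      iteratedDeriv_add (f := c • g) (hgk.const_smul c) (hh'.of_le (Nat.cast_le.2 hk)),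
      iteratedDeriv_const_smul hgk]
  have vanishing (k : ℕ) (hk : k < n + 2) : iteratedDeriv k g x = 0 := by
    induction k using Nat.twoStepInduction with
    | zero => simpa using hgx
    | one => simpa using h_deriv
    | more k ih _ =>
      rw [recurrence k (by lia), ih (by lia), hh.iteratedDeriv_eq_zero k (by lia), smul_zero,
        add_zero]
  refine ⟨vanishing, ?_⟩
  rw [recurrence n le_rfl, vanishing n (by lia), smul_zero, zero_add]
  exact hh.iteratedDeriv_ne_zero

end HasVanishingOrderAt

end VanishingOrder

section InnerProduct

variable {F : Type*} [NormedAddCommGroup F] [InnerProductSpace ℝ F] {f g : ℝ → F} {x : ℝ}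

theorem iteratedDeriv_inner_const {k : ℕ} (hf : ContDiffAt ℝ k f x) (w : F) :
    iteratedDeriv k (fun s => ⟪f s, w⟫) x = ⟪iteratedDeriv k f x, w⟫ := by
  have inner_eq_comp : (fun s => ⟪f s, w⟫) = innerSL ℝ w ∘ f := by
    ext s
    simp [real_inner_comm]
  rw [inner_eq_comp, iteratedDeriv, (innerSL ℝ w).iteratedFDeriv_comp_left hf le_rfl]
  simp [iteratedDeriv, real_inner_comm]

theorem inner_add_inner_eq_zero_of_eventually_inner_eq {f' g' : F} {c : ℝ}
    (hf : HasDerivAt f f' x) (hg : HasDerivAt g g' x) (hc : ∀ᶠ s in 𝓝 x, ⟪f s, g s⟫ = c) :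
    ⟪f x, g'⟫ + ⟪f', g x⟫ = 0 :=
  (hf.inner ℝ hg).unique ((hasDerivAt_const x c).congr_of_eventuallyEq hc)

theorem HasVanishingOrderAt.inner_iteratedDeriv {n : ℕ} {w : F}
    (h : HasVanishingOrderAt (fun s => ⟪deriv f s, w⟫) n x) (hf : ContDiffAt ℝ n (deriv f) x) :
    (∀ k, 1 ≤ k → k ≤ n → ⟪iteratedDeriv k f x, w⟫ = 0) ∧
      ⟪iteratedDeriv (n + 1) f x, w⟫ ≠ 0 := by
  have inner_succ (k : ℕ) (hk : k ≤ n) :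
      ⟪iteratedDeriv (k + 1) f x, w⟫ = iteratedDeriv k (fun s => ⟪deriv f s, w⟫) x := by
    rw [iteratedDeriv_succ', iteratedDeriv_inner_const (hf.of_le (Nat.cast_le.2 hk))]
  constructor
  · rintro (_ | k) hk hkn
    · simp at hk
    · rw [inner_succ k (by lia)]
      exact h.iteratedDeriv_eq_zero k hkn
  · rw [inner_succ n le_rfl]
    exact h.iteratedDeriv_ne_zero

end InnerProduct

namespace E3

theorem cross_eq_toLp (u v : E3) : cross u v = WithLp.toLp 2 (crossProduct u.ofLp v.ofLp) := by
  rw [cross_apply]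
  rfl

theorem inner_eq_dotProduct (u v : E3) : ⟪u, v⟫ = u.ofLp ⬝ᵥ v.ofLp := by
  simp [EuclideanSpace.inner_eq_star_dotProduct, dotProduct_comm]

theorem inner_self_cross (u v : E3) : ⟪u, cross u v⟫ = 0 := by
  simp [cross_eq_toLp, inner_eq_dotProduct]

theorem inner_cross_self (u v : E3) : ⟪v, cross u v⟫ = 0 := by
  simp [cross_eq_toLp, inner_eq_dotProduct]

theorem inner_cross_cross (u v w x : E3) :
    ⟪cross u v, cross w x⟫ = ⟪u, w⟫ * ⟪v, x⟫ - ⟪u, x⟫ * ⟪v, w⟫ := by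
  simp [cross_eq_toLp, inner_eq_dotProduct, cross_dot_cross]

theorem cross_cross_eq (u v w : E3) : cross u (cross v w) = ⟪u, w⟫ • v - ⟪u, v⟫ • w := by
  ext i
  simp [cross_eq_toLp, inner_eq_dotProduct, cross_cross_eq_smul_sub_smul', dotProduct_comm]

theorem cross_self (u : E3) : cross u u = 0 := by
  simp [cross_eq_toLp]

theorem neg_cross (u v : E3) : -cross u v = cross v u := by
  simp [cross_eq_toLp, ← WithLp.toLp_neg]

/-- The cross product as a continuous bilinear map, giving access to the calculus of such maps. -/
def crossCLM : E3 →L[ℝ] E3 →L[ℝ] E3 :=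
  (LinearMap.mk₂ ℝ cross
    (fun u u' v => by simp [cross_eq_toLp]) (fun c u v => by simp [cross_eq_toLp])
    (fun u v v' => by simp [cross_eq_toLp])
    (fun c u v => by simp [cross_eq_toLp])).toContinuousBilinearMap

theorem crossCLM_apply (u v : E3) : crossCLM u v = cross u v := rfl

theorem hasDerivAt_cross {f g : ℝ → E3} {f' g' : E3} {s : ℝ} (hf : HasDerivAt f f' s)
    (hg : HasDerivAt g g' s) :
    HasDerivAt (fun x => cross (f x) (g x)) (cross (f s) g' + cross f' (g s)) s :=
  crossCLM.hasDerivAt_of_bilinear (fun _ => hf) (fun _ => hg)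

theorem contDiffOn_cross {f g : ℝ → E3} {I : Set ℝ} {n : WithTop ℕ∞} (hf : ContDiffOn ℝ n f I)
    (hg : ContDiffOn ℝ n g I) : ContDiffOn ℝ n (fun x => cross (f x) (g x)) I :=
  (crossCLM.contDiff.comp_contDiffOn hf).clm_apply hg

section Frame

variable {u n : E3}

theorem norm_cross_of_orthonormal (hu : ‖u‖ = 1) (hn : ‖n‖ = 1) (hun : ⟪u, n⟫ = 0) :
    ‖cross u n‖ = 1 := by
  rw [norm_eq_sqrt_real_inner, inner_cross_cross]
  simp [hu, hn, hun]

theorem orthonormal_cross (hu : ‖u‖ = 1) (hn : ‖n‖ = 1) (hun : ⟪u, n⟫ = 0) :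
    Orthonormal ℝ ![u, n, cross u n] := by
  simp [orthonormal_vecCons_iff, Fin.forall_fin_two, hu, hn, hun,
    norm_cross_of_orthonormal hu hn hun, inner_self_cross, inner_cross_self]

theorem eq_sum_inner_smul_frame (hu : ‖u‖ = 1) (hn : ‖n‖ = 1) (hun : ⟪u, n⟫ = 0) (x : E3) :
    x = ⟪x, u⟫ • u + ⟪x, n⟫ • n + ⟪x, cross u n⟫ • cross u n := by
  have horth := orthonormal_cross hu hn hun
  let b := (basisOfOrthonormalOfCardEqFinrank horth (by simp)).toOrthonormalBasis
    (by simpa only [coe_basisOfOrthonormalOfCardEqFinrank] using horth)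
  simpa [b, Fin.sum_univ_three, real_inner_comm] using (b.sum_repr' x).symm

theorem cross_first_eq (hu : ‖u‖ = 1) (hn : ‖n‖ = 1) (hun : ⟪u, n⟫ = 0) (x : E3) :
    cross u x = ⟪x, n⟫ • cross u n - ⟪x, cross u n⟫ • n := by
  have cross_third : cross u (cross u n) = -n := by
    simp [cross_cross_eq, hun, hu]
  conv_lhs => rw [eq_sum_inner_smul_frame hu hn hun x]
  simp only [← crossCLM_apply, map_add, map_smul]
  simp only [crossCLM_apply, cross_self, cross_third]
  module

theorem cross_second_eq (hu : ‖u‖ = 1) (hn : ‖n‖ = 1) (hun : ⟪u, n⟫ = 0) (x : E3) :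
    cross n x = ⟪x, cross u n⟫ • u - ⟪x, u⟫ • cross u n := by
  have cross_third : cross n (cross u n) = u := by
    simp [cross_cross_eq, hn, real_inner_comm, hun]
  conv_lhs => rw [eq_sum_inner_smul_frame hu hn hun x]
  simp only [← crossCLM_apply, map_add, map_smul]
  simp only [crossCLM_apply, cross_self, cross_third, ← neg_cross u n]
  module

end Frame

end E3

/-- `v₀` is a smooth curve on the unit sphere, parametrized by arc length over the open set `I`. -/
structure IsUnitSpeedSphericalOn (v₀ : ℝ → E3) (I : Set ℝ) : Prop where
  isOpen : IsOpen I
  contDiffOn_v₀ : ContDiffOn ℝ ∞ v₀ I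
  norm_v₀ : ∀ s ∈ I, ‖v₀ s‖ = 1
  norm_n₀ : ∀ s ∈ I, ‖n₀ v₀ s‖ = 1

namespace IsUnitSpeedSphericalOn

variable {v₀ : ℝ → E3} {I : Set ℝ} {s : ℝ}

theorem contDiffOn_n₀ (hv : IsUnitSpeedSphericalOn v₀ I) : ContDiffOn ℝ ∞ (n₀ v₀) I :=
  hv.contDiffOn_v₀.deriv_of_isOpen hv.isOpen (by simp)

theorem contDiffOn_t₀ (hv : IsUnitSpeedSphericalOn v₀ I) : ContDiffOn ℝ ∞ (t₀ v₀) I :=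
  E3.contDiffOn_cross hv.contDiffOn_v₀ hv.contDiffOn_n₀

theorem contDiffOn_τ₀ (hv : IsUnitSpeedSphericalOn v₀ I) : ContDiffOn ℝ ∞ (τ₀ v₀) I :=
  (hv.contDiffOn_n₀.deriv_of_isOpen hv.isOpen (by simp)).inner ℝ hv.contDiffOn_t₀

theorem hasDerivAt_v₀ (hv : IsUnitSpeedSphericalOn v₀ I) (hs : s ∈ I) :
    HasDerivAt v₀ (n₀ v₀ s) s :=
  (hv.contDiffOn_v₀.differentiableOn (by simp)).hasDerivAt (hv.isOpen.mem_nhds hs)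

theorem hasDerivAt_n₀_deriv (hv : IsUnitSpeedSphericalOn v₀ I) (hs : s ∈ I) :
    HasDerivAt (n₀ v₀) (deriv (n₀ v₀) s) s :=
  (hv.contDiffOn_n₀.differentiableOn (by simp)).hasDerivAt (hv.isOpen.mem_nhds hs)

theorem inner_v₀_n₀ (hv : IsUnitSpeedSphericalOn v₀ I) (hs : s ∈ I) : ⟪v₀ s, n₀ v₀ s⟫ = 0 := by
  have h := inner_add_inner_eq_zero_of_eventually_inner_eq (c := 1) (hv.hasDerivAt_v₀ hs)
    (hv.hasDerivAt_v₀ hs) (eventually_of_mem (hv.isOpen.mem_nhds hs) fun s hs => by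
      rw [real_inner_self_eq_norm_sq, hv.norm_v₀ s hs, one_pow])
  linarith [real_inner_comm (v₀ s) (n₀ v₀ s)]

theorem norm_t₀ (hv : IsUnitSpeedSphericalOn v₀ I) (hs : s ∈ I) : ‖t₀ v₀ s‖ = 1 :=
  E3.norm_cross_of_orthonormal (hv.norm_v₀ s hs) (hv.norm_n₀ s hs) (hv.inner_v₀_n₀ hs)

theorem inner_deriv_n₀_v₀ (hv : IsUnitSpeedSphericalOn v₀ I) (hs : s ∈ I) :
    ⟪deriv (n₀ v₀) s, v₀ s⟫ = -1 := by
  have h := inner_add_inner_eq_zero_of_eventually_inner_eq (hv.hasDerivAt_v₀ hs)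
    (hv.hasDerivAt_n₀_deriv hs) (eventually_of_mem (hv.isOpen.mem_nhds hs) fun _ => hv.inner_v₀_n₀)
  rw [real_inner_self_eq_norm_sq, hv.norm_n₀ s hs, real_inner_comm] at h
  linarith

theorem inner_deriv_n₀_n₀ (hv : IsUnitSpeedSphericalOn v₀ I) (hs : s ∈ I) :
    ⟪deriv (n₀ v₀) s, n₀ v₀ s⟫ = 0 := by
  have h := inner_add_inner_eq_zero_of_eventually_inner_eq (c := 1) (hv.hasDerivAt_n₀_deriv hs)
    (hv.hasDerivAt_n₀_deriv hs) (eventually_of_mem (hv.isOpen.mem_nhds hs) fun s hs => by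
      rw [real_inner_self_eq_norm_sq, hv.norm_n₀ s hs, one_pow])
  linarith [real_inner_comm (n₀ v₀ s) (deriv (n₀ v₀) s)]

theorem hasDerivAt_n₀ (hv : IsUnitSpeedSphericalOn v₀ I) (hs : s ∈ I) :
    HasDerivAt (n₀ v₀) (-v₀ s + τ₀ v₀ s • t₀ v₀ s) s := by
  refine (hv.hasDerivAt_n₀_deriv hs).congr_deriv ?_
  rw [E3.eq_sum_inner_smul_frame (hv.norm_v₀ s hs) (hv.norm_n₀ s hs) (hv.inner_v₀_n₀ hs)
    (deriv (n₀ v₀) s), hv.inner_deriv_n₀_v₀ hs, hv.inner_deriv_n₀_n₀ hs, τ₀, t₀]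
  module

theorem inner_n₁_n₀ (hv : IsUnitSpeedSphericalOn v₀ I) (v₁ : ℝ → E3) (hs : s ∈ I) :
    ⟪n₁ v₀ v₁ s, n₀ v₀ s⟫ = 0 := by
  have norm_deriv : ‖deriv v₀ s‖ = 1 := hv.norm_n₀ s hs
  simp [n₁, n₀, κ₁, inner_sub_left, inner_smul_left, norm_deriv, real_inner_comm]

theorem cross_v₀_eq (hv : IsUnitSpeedSphericalOn v₀ I) (hs : s ∈ I) (x : E3) :
    cross (v₀ s) x = ⟪x, n₀ v₀ s⟫ • t₀ v₀ s - ⟪x, t₀ v₀ s⟫ • n₀ v₀ s :=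
  E3.cross_first_eq (hv.norm_v₀ s hs) (hv.norm_n₀ s hs) (hv.inner_v₀_n₀ hs) x

theorem cross_n₀_eq (hv : IsUnitSpeedSphericalOn v₀ I) (hs : s ∈ I) (x : E3) :
    cross (n₀ v₀ s) x = ⟪x, t₀ v₀ s⟫ • v₀ s - ⟪x, v₀ s⟫ • t₀ v₀ s :=
  E3.cross_second_eq (hv.norm_v₀ s hs) (hv.norm_n₀ s hs) (hv.inner_v₀_n₀ hs) x

theorem hasDerivAt_t₀ (hv : IsUnitSpeedSphericalOn v₀ I) (hs : s ∈ I) :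
    HasDerivAt (t₀ v₀) (-τ₀ v₀ s • n₀ v₀ s) s := by
  refine (E3.hasDerivAt_cross (hv.hasDerivAt_v₀ hs) (hv.hasDerivAt_n₀_deriv hs)).congr_deriv ?_
  rw [E3.cross_self, hv.cross_v₀_eq hs, hv.inner_deriv_n₀_n₀ hs, τ₀]
  module

theorem contDiffAt_inner_v₀ (hv : IsUnitSpeedSphericalOn v₀ I) (hs : s ∈ I) (w : E3) {n : ℕ} :
    ContDiffAt ℝ n (fun s => ⟪v₀ s, w⟫) s :=
  ((hv.contDiffOn_v₀.contDiffAt (hv.isOpen.mem_nhds hs)).inner ℝ contDiffAt_const).of_le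
    (by exact_mod_cast le_top)

theorem deriv_inner_v₀ (hv : IsUnitSpeedSphericalOn v₀ I) (hs : s ∈ I) (w : E3) :
    deriv (fun s => ⟪v₀ s, w⟫) s = ⟪n₀ v₀ s, w⟫ := by
  simpa using ((hv.hasDerivAt_v₀ hs).inner ℝ (hasDerivAt_const s w)).deriv

theorem deriv_deriv_inner_v₀ (hv : IsUnitSpeedSphericalOn v₀ I) (hs : s ∈ I) (w : E3) :
    deriv (deriv fun s => ⟪v₀ s, w⟫) s = -⟪v₀ s, w⟫ + τ₀ v₀ s * ⟪t₀ v₀ s, w⟫ := by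
  have deriv_inner_eventuallyEq :
      deriv (fun s => ⟪v₀ s, w⟫) =ᶠ[𝓝 s] fun s => ⟪n₀ v₀ s, w⟫ :=
    eventually_of_mem (hv.isOpen.mem_nhds hs) fun _ hs => hv.deriv_inner_v₀ hs w
  rw [deriv_inner_eventuallyEq.deriv_eq]
  simpa [inner_add_left, inner_smul_left] using
    ((hv.hasDerivAt_n₀ hs).inner ℝ (hasDerivAt_const s w)).deriv

theorem hasVanishingOrderAt_inner_v₀_self (hv : IsUnitSpeedSphericalOn v₀ I) (hs : s ∈ I) :
    HasVanishingOrderAt (fun x => ⟪v₀ x, v₀ s⟫) 0 s := by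
  simp [HasVanishingOrderAt.zero_iff, hv.norm_v₀ s hs]

theorem hasVanishingOrderAt_inner_v₀_n₀ (hv : IsUnitSpeedSphericalOn v₀ I) (hs : s ∈ I) :
    HasVanishingOrderAt (fun x => ⟪v₀ x, n₀ v₀ s⟫) 1 s := by
  refine .succ (hv.inner_v₀_n₀ hs) (HasVanishingOrderAt.zero_iff.2 ?_)
  simp [hv.deriv_inner_v₀ hs, hv.norm_n₀ s hs]

theorem hasVanishingOrderAt_inner_v₀_t₀ (hv : IsUnitSpeedSphericalOn v₀ I) {n : ℕ} (hs : s ∈ I)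
    (hτ₀ : HasVanishingOrderAt (τ₀ v₀) n s) :
    HasVanishingOrderAt (fun x => ⟪v₀ x, t₀ v₀ s⟫) (n + 2) s := by
  have hI := hv.isOpen.mem_nhds hs
  have contDiffAt_τ₀ : ContDiffAt ℝ n (τ₀ v₀) s :=
    (hv.contDiffOn_τ₀.contDiffAt hI).of_le (by exact_mod_cast le_top)
  have contDiffAt_inner_t₀ : ContDiffAt ℝ n (fun x => ⟪t₀ v₀ x, t₀ v₀ s⟫) s :=
    ((hv.contDiffOn_t₀.contDiffAt hI).inner ℝ contDiffAt_const).of_le (by exact_mod_cast le_top)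
  have order_inner_t₀ : HasVanishingOrderAt (fun x => ⟪t₀ v₀ x, t₀ v₀ s⟫) 0 s := by
    simp [HasVanishingOrderAt.zero_iff, hv.norm_t₀ hs]
  refine (hτ₀.mul order_inner_t₀ contDiffAt_τ₀ contDiffAt_inner_t₀).of_deriv_deriv_eq (c := -1)
    (eventually_of_mem hI fun x hx => ?_) (E3.inner_self_cross _ _) ?_
    (hv.contDiffAt_inner_v₀ hs _) (contDiffAt_τ₀.mul contDiffAt_inner_t₀)
  · simp [hv.deriv_deriv_inner_v₀ hx]
  · rw [hv.deriv_inner_v₀ hs]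
    exact E3.inner_cross_self _ _

end IsUnitSpeedSphericalOn

theorem Ruled.inner_n₁_t₀ (v₀ v₁ : ℝ → E3) (s : ℝ) :
    ⟪n₁ v₀ v₁ s, t₀ v₀ s⟫ = ⟪deriv v₁ s, t₀ v₀ s⟫ := by
  have inner_n₀_t₀ : ⟪deriv v₀ s, t₀ v₀ s⟫ = 0 := E3.inner_cross_self _ _
  simp [n₁, inner_sub_left, inner_smul_left, inner_n₀_t₀]

/-- The dual curve `v₀ + ε v₁` describes a smooth arc-length parametrized non-cylindrical ruled
surface over the open set `I`. -/
structure IsArcLengthRuledOn (v₀ v₁ : ℝ → E3) (I : Set ℝ) : Prop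
    extends IsUnitSpeedSphericalOn v₀ I where
  contDiffOn_v₁ : ContDiffOn ℝ ∞ v₁ I
  inner_v₀_v₁ : ∀ s ∈ I, ⟪v₀ s, v₁ s⟫ = 0

namespace IsArcLengthRuledOn

variable {v₀ v₁ : ℝ → E3} {I : Set ℝ} {s : ℝ}

theorem contDiffOn_n₁ (hv : IsArcLengthRuledOn v₀ v₁ I) : ContDiffOn ℝ ∞ (n₁ v₀ v₁) I := by
  have contDiffOn_deriv_v₁ : ContDiffOn ℝ ∞ (deriv v₁) I :=
    hv.contDiffOn_v₁.deriv_of_isOpen hv.isOpen (by simp)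
  exact contDiffOn_deriv_v₁.sub
    ((hv.contDiffOn_n₀.inner ℝ contDiffOn_deriv_v₁).smul hv.contDiffOn_n₀)

theorem contDiffOn_t₁ (hv : IsArcLengthRuledOn v₀ v₁ I) : ContDiffOn ℝ ∞ (t₁ v₀ v₁) I :=
  (E3.contDiffOn_cross hv.contDiffOn_v₀ hv.contDiffOn_n₁).add
    (E3.contDiffOn_cross hv.contDiffOn_v₁ hv.contDiffOn_n₀)

theorem contDiffOn_τ₁ (hv : IsArcLengthRuledOn v₀ v₁ I) : ContDiffOn ℝ ∞ (τ₁ v₀ v₁) I :=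
  ((hv.contDiffOn_n₀.deriv_of_isOpen hv.isOpen (by simp)).inner ℝ hv.contDiffOn_t₁).add
    ((hv.contDiffOn_n₁.deriv_of_isOpen hv.isOpen (by simp)).inner ℝ hv.contDiffOn_t₀)

theorem hasDerivAt_r (hv : IsArcLengthRuledOn v₀ v₁ I) (hs : s ∈ I) :
    HasDerivAt (r v₀ v₁)
      (⟪v₁ s, t₀ v₀ s⟫ • v₀ s - ⟪n₁ v₀ v₁ s, t₀ v₀ s⟫ • n₀ v₀ s + κ₁ v₀ v₁ s • t₀ v₀ s) s := by
  have hasDerivAt_v₁ : HasDerivAt v₁ (deriv v₁ s) s :=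
    (hv.contDiffOn_v₁.differentiableOn (by simp)).hasDerivAt (hv.isOpen.mem_nhds hs)
  refine (E3.hasDerivAt_cross (hv.hasDerivAt_v₀ hs) hasDerivAt_v₁).congr_deriv ?_
  rw [hv.cross_v₀_eq hs, hv.cross_n₀_eq hs, real_inner_comm (v₀ s), hv.inner_v₀_v₁ s hs,
    inner_n₁_t₀, real_inner_comm (n₀ v₀ s), κ₁, n₀]
  module

theorem strict_eq (hv : IsArcLengthRuledOn v₀ v₁ I) (hs : s ∈ I) :
    strict v₀ v₁ s = r v₀ v₁ s + ⟪n₁ v₀ v₁ s, t₀ v₀ s⟫ • v₀ s := by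
  have inner_deriv_r : ⟪deriv (r v₀ v₁) s, n₀ v₀ s⟫ = -⟪n₁ v₀ v₁ s, t₀ v₀ s⟫ := by
    have inner_t₀_n₀ : ⟪t₀ v₀ s, n₀ v₀ s⟫ = 0 := by
      rw [real_inner_comm]
      exact E3.inner_cross_self _ _
    simp [(hv.hasDerivAt_r hs).deriv, inner_add_left, inner_sub_left, inner_smul_left,
      hv.inner_v₀_n₀ hs, hv.norm_n₀ s hs, inner_t₀_n₀]
  change r v₀ v₁ s - ⟪deriv (r v₀ v₁) s, n₀ v₀ s⟫ • v₀ s = _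
  rw [inner_deriv_r, neg_smul, sub_neg_eq_add]

theorem hasDerivAt_inner_n₁_t₀ (hv : IsArcLengthRuledOn v₀ v₁ I) (hs : s ∈ I) :
    HasDerivAt (fun s => ⟪n₁ v₀ v₁ s, t₀ v₀ s⟫) ⟪deriv (n₁ v₀ v₁) s, t₀ v₀ s⟫ s := by
  have hasDerivAt_n₁ : HasDerivAt (n₁ v₀ v₁) (deriv (n₁ v₀ v₁) s) s :=
    (hv.contDiffOn_n₁.differentiableOn (by simp)).hasDerivAt (hv.isOpen.mem_nhds hs)
  simpa [inner_smul_right, hv.inner_n₁_n₀ v₁ hs] using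
    hasDerivAt_n₁.inner ℝ (hv.hasDerivAt_t₀ hs)

theorem τ₁_eq (hv : IsArcLengthRuledOn v₀ v₁ I) (hs : s ∈ I) :
    τ₁ v₀ v₁ s = ⟪v₁ s, t₀ v₀ s⟫ + ⟪deriv (n₁ v₀ v₁) s, t₀ v₀ s⟫ := by
  have t₁_eq : t₁ v₀ v₁ s = -⟪n₁ v₀ v₁ s, t₀ v₀ s⟫ • n₀ v₀ s - ⟪v₁ s, t₀ v₀ s⟫ • v₀ s := by
    rw [t₁, ← E3.neg_cross (n₀ v₀ s), hv.cross_v₀_eq hs, hv.cross_n₀_eq hs, hv.inner_n₁_n₀ v₁ hs,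
      real_inner_comm (v₀ s), hv.inner_v₀_v₁ s hs]
    module
  simp [τ₁, t₁_eq, inner_sub_right, inner_smul_right, hv.inner_deriv_n₀_v₀ hs,
    hv.inner_deriv_n₀_n₀ hs]

theorem hasDerivAt_strict (hv : IsArcLengthRuledOn v₀ v₁ I) (hs : s ∈ I) :
    HasDerivAt (strict v₀ v₁) (τ₁ v₀ v₁ s • v₀ s + κ₁ v₀ v₁ s • t₀ v₀ s) s := by
  have h := (hv.hasDerivAt_r hs).add ((hv.hasDerivAt_inner_n₁_t₀ hs).smul (hv.hasDerivAt_v₀ hs))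
  refine (h.congr_of_eventuallyEq
    (eventually_of_mem (hv.isOpen.mem_nhds hs) fun _ => hv.strict_eq)).congr_deriv ?_
  rw [hv.τ₁_eq hs]
  module

theorem inner_iteratedDeriv_strict (hv : IsArcLengthRuledOn v₀ v₁ I)
    (hκ₁ : ∀ s ∈ I, κ₁ v₀ v₁ s = 0) (hs : s ∈ I) {m n : ℕ} {w : E3}
    (hτ₁ : HasVanishingOrderAt (τ₁ v₀ v₁) m s)
    (hw : HasVanishingOrderAt (fun x => ⟪v₀ x, w⟫) n s) :
    (∀ k, 1 ≤ k → k ≤ m + n → ⟪iteratedDeriv k (strict v₀ v₁) s, w⟫ = 0) ∧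
      ⟪iteratedDeriv (m + n + 1) (strict v₀ v₁) s, w⟫ ≠ 0 := by
  have hI := hv.isOpen.mem_nhds hs
  have deriv_strict : deriv (strict v₀ v₁) =ᶠ[𝓝 s] fun x => τ₁ v₀ v₁ x • v₀ x :=
    eventually_of_mem hI fun x hx => by
      simpa [hκ₁ x hx] using (hv.hasDerivAt_strict hx).deriv
  have contDiffAt_deriv_strict : ContDiffAt ℝ ∞ (deriv (strict v₀ v₁)) s :=
    ((hv.contDiffOn_τ₁.smul hv.contDiffOn_v₀).contDiffAt hI).congr_of_eventuallyEq deriv_strict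
  have contDiffAt_τ₁ : ContDiffAt ℝ (m + n : ℕ) (τ₁ v₀ v₁) s :=
    (hv.contDiffOn_τ₁.contDiffAt hI).of_le (by exact_mod_cast le_top)
  refine ((hτ₁.mul hw contDiffAt_τ₁ (hv.contDiffAt_inner_v₀ hs w)).congr
    ?_).inner_iteratedDeriv (contDiffAt_deriv_strict.of_le (by exact_mod_cast le_top))
  filter_upwards [deriv_strict] with x hx
  simp [hx, inner_smul_left]

end IsArcLengthRuledOn

/-- Orders of the striction curve of a developable surface: if `τ₁` vanishes to order
exactly `m - 1` and `τ₀` to order exactly `r' - 1` at `s₀`, then the frame components of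
the derivatives of the striction curve vanish exactly as for a space curve of type
`(m, m + 1, m + 1 + r')`. -/
theorem striction_curve_type
    (I : Set ℝ) (v₀ v₁ : ℝ → E3)
    (hI : IsOpen I) (hI' : I.OrdConnected)
    (hv₀ : ContDiffOn ℝ (⊤ : ℕ∞) v₀ I) (hv₁ : ContDiffOn ℝ (⊤ : ℕ∞) v₁ I)
    (hunit : ∀ s ∈ I, ‖v₀ s‖ = 1) (horth : ∀ s ∈ I, ⟪v₀ s, v₁ s⟫ = 0)
    (harc : ∀ s ∈ I, ‖deriv v₀ s‖ = 1)
    (hdev : ∀ s ∈ I, κ₁ v₀ v₁ s = 0)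
    (s₀ : ℝ) (hs₀ : s₀ ∈ I) (m r' : ℕ) (hm : 1 ≤ m) (hr : 1 ≤ r')
    (hτ₁zero : ∀ k < m - 1, iteratedDeriv k (τ₁ v₀ v₁) s₀ = 0)
    (hτ₁ne : iteratedDeriv (m - 1) (τ₁ v₀ v₁) s₀ ≠ 0)
    (hτ₀zero : ∀ k < r' - 1, iteratedDeriv k (τ₀ v₀) s₀ = 0)
    (hτ₀ne : iteratedDeriv (r' - 1) (τ₀ v₀) s₀ ≠ 0) :
    (∀ k : ℕ, 1 ≤ k → k ≤ m - 1 → ⟪iteratedDeriv k (strict v₀ v₁) s₀, v₀ s₀⟫ = 0) ∧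
    ⟪iteratedDeriv m (strict v₀ v₁) s₀, v₀ s₀⟫ ≠ 0 ∧
    (∀ k : ℕ, 1 ≤ k → k ≤ m → ⟪iteratedDeriv k (strict v₀ v₁) s₀, n₀ v₀ s₀⟫ = 0) ∧
    ⟪iteratedDeriv (m + 1) (strict v₀ v₁) s₀, n₀ v₀ s₀⟫ ≠ 0 ∧
    (∀ k : ℕ, 1 ≤ k → k ≤ m + r' → ⟪iteratedDeriv k (strict v₀ v₁) s₀, t₀ v₀ s₀⟫ = 0) ∧
    ⟪iteratedDeriv (m + 1 + r') (strict v₀ v₁) s₀, t₀ v₀ s₀⟫ ≠ 0 := by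
  obtain ⟨m, rfl⟩ := Nat.exists_eq_add_of_le' hm
  obtain ⟨r', rfl⟩ := Nat.exists_eq_add_of_le' hr
  have hv : IsArcLengthRuledOn v₀ v₁ I := ⟨⟨hI, hv₀, hunit, harc⟩, hv₁, horth⟩
  have hτ₁ : HasVanishingOrderAt (τ₁ v₀ v₁) m s₀ := ⟨hτ₁zero, hτ₁ne⟩
  have hτ₀ : HasVanishingOrderAt (τ₀ v₀) r' s₀ := ⟨hτ₀zero, hτ₀ne⟩
  obtain ⟨hA, hA_ne⟩ :=
    hv.inner_iteratedDeriv_strict hdev hs₀ hτ₁ (hv.hasVanishingOrderAt_inner_v₀_self hs₀)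
  obtain ⟨hB, hB_ne⟩ :=
    hv.inner_iteratedDeriv_strict hdev hs₀ hτ₁ (hv.hasVanishingOrderAt_inner_v₀_n₀ hs₀)
  obtain ⟨hC, hC_ne⟩ :=
    hv.inner_iteratedDeriv_strict hdev hs₀ hτ₁ (hv.hasVanishingOrderAt_inner_v₀_t₀ hs₀ hτ₀)
  refine ⟨hA, hA_ne, hB, hB_ne, fun k hk hk' => hC k hk (by lia), ?_⟩
  rwa [show m + 1 + 1 + (r' + 1) = m + (r' + 2) + 1 by lia]
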